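/- arXiv:2209.04816 — 2 statements merged into one kernel-verified Lean document; each statement's English description precedes it below -/
import Mathlib

section
/- Let d ≥ 1 and ℓ ∈ ℤ_{≥0}^d. Let f : 𝔻^d → ℂ and g = (g₁,…,g_d) : 𝔻^d → 𝔻^d be analytic, and suppose that conj(f(z))·f(u)·K_{g(z)}(g(u)) = K_z(u) for all z, u ∈ 𝔻^d, where K_w(u) = ∏_{j=1}^d (1 − u_j·conj(w_j))^{−(ℓ_j+2)}. Then there exist c ∈ 𝕋, a₁,…,a_d ∈ 𝕋, θ = (θ₁,…,θ_d) ∈ 𝔻^d, and a bijection φ : {1,…,d} → {1,…,d} such that f(z) = c·∏_{j=1}^d (1 − |θ_j|²)^{1+ℓ_j/2}/(1 − a_j·conj(θ_j)·z_{φ(j)})^{ℓ_j+2} and g_κ(z) = a_κ·(conj(a_κ)·θ_κ − z_{φ(κ)})/(1 − a_κ·conj(θ_κ)·z_{φ(κ)}) for every κ ∈ {1,…,d} and all z ∈ 𝔻^d. -/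
open Complex ComplexConjugate

lemma aux_der {d : ℕ} (n : Fin d → ℕ) (c : Fin d → ℂ) (p : ℂ → Fin d → ℂ) (B : Fin d → ℂ)
    (hp : HasDerivAt p B 0) (p0 : p 0 = 0) :
    HasDerivAt (fun t => ∏ j, (1 - c j * p t j) ^ n j) (- ∑ j, (n j : ℂ) * c j * B j) 0 := by
  have hj : ∀ j ∈ Finset.univ, HasDerivAt (fun t => (1 - c j * p t j) ^ n j)
      (-((n j : ℂ) * c j * B j)) 0 := by
    intro j _
    have h1 := (((hasDerivAt_pi.1 hp j).const_mul (c j)).const_sub 1).fun_pow (n j)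
    refine h1.congr_deriv ?_
    simp [p0]
    try ring
  have h2 := HasDerivAt.fun_finsetProd hj
  refine h2.congr_deriv ?_
  simp [p0]

lemma aux_poly {d : ℕ} (n : Fin d → ℕ) (hn : ∀ j, 1 ≤ n j) (x : Fin d → ℂ) (y : ℂ) (N : ℕ)
    (ε : ℝ) (hε : 0 < ε)
    (H : ∀ t : ℝ, 0 < t → t < ε → ∏ j, (1 - (t : ℂ) * x j) ^ n j = (1 - (t : ℂ) * y) ^ N) (j : Fin d) :
    x j = 0 ∨ x j = y := by
  classical
  by_cases hx : x j = 0
  · exact Or.inl hx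
  right
  let P : Polynomial ℂ := ∏ j, (1 - Polynomial.X * Polynomial.C (x j)) ^ n j
  let Q : Polynomial ℂ := (1 - Polynomial.X * Polynomial.C y) ^ N
  have hPQ : P = Q := by
    apply Polynomial.eq_of_infinite_eval_eq
    have hinf : ((fun t : ℝ => (t : ℂ)) '' Set.Ioo 0 ε).Infinite :=
      (Set.Ioo_infinite hε).image (Complex.ofReal_injective.injOn)
    refine hinf.mono ?_
    rintro _ ⟨t, ht, rfl⟩
    simp only [Set.mem_ofPred_eq, P, Q, Polynomial.eval_prod]
    simp only [Polynomial.eval_pow, Polynomial.eval_sub, Polynomial.eval_one,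
      Polynomial.eval_mul, Polynomial.eval_X, Polynomial.eval_C]
    exact H t ht.1 ht.2
  have h1 := congrArg (Polynomial.eval (x j)⁻¹) hPQ
  simp only [P, Q, Polynomial.eval_prod] at h1
  rw [Finset.prod_eq_zero (Finset.mem_univ j)
    (by simp [hx, Nat.one_le_iff_ne_zero.1 (hn j)])] at h1
  rw [Polynomial.eval_pow] at h1
  have h2 := eq_zero_of_pow_eq_zero h1.symm
  simp at h2
  field_simp at h2
  linear_combination h2

lemma aux_key {d : ℕ} (n : Fin d → ℕ) (hn : ∀ j, 1 ≤ n j) (h : (Fin d → ℂ) → Fin d → ℂ)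
    (hdiff : DifferentiableAt ℂ h 0) (h0 : h 0 = 0)
    (H : ∀ z u : Fin d → ℂ, (∀ j, ‖z j‖ < 1) → (∀ j, ‖u j‖ < 1) →
      ∏ j, (1 - h u j * conj (h z j)) ^ n j = ∏ j, (1 - u j * conj (z j)) ^ n j) :
    ∃ (α : Fin d → ℂ) (φ : Equiv.Perm (Fin d)), (∀ j, ‖α j‖ = 1) ∧
      ∀ u : Fin d → ℂ, (∀ j, ‖u j‖ < 1) → ∀ j, h u j = α j * u (φ j) := by
  classical
  have hn0 : ∀ j, (n j : ℂ) ≠ 0 := fun j => by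
    have := hn j
    exact_mod_cast (by omega : n j ≠ 0)
  -- derivative
  have hB : ∀ m : Fin d, ∃ B : Fin d → ℂ, HasDerivAt (fun t : ℂ => h (Pi.single m t)) B 0 := by
    intro m
    have hs : HasDerivAt (fun t : ℂ => (Pi.single m t : Fin d → ℂ)) (Pi.single m 1) 0 := by
      rw [hasDerivAt_pi]
      intro i
      by_cases hi : i = m
      · subst hi; simp only [Pi.single_eq_same]; exact hasDerivAt_id' (0 : ℂ)
      · simpa [Pi.single_apply, hi] using hasDerivAt_const (0 : ℂ) (0 : ℂ)
    have hh : HasFDerivAt h (fderiv ℂ h 0) (Pi.single m (0 : ℂ)) := by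
      rw [Pi.single_zero]; exact hdiff.hasFDerivAt
    exact ⟨_, hh.comp_hasDerivAt (0 : ℂ) hs⟩
  choose B hB using hB
  have hlin : ∀ u : Fin d → ℂ, (∀ j, ‖u j‖ < 1) → ∀ m,
      ∑ j, (n j : ℂ) * conj (B m j) * h u j = n m * u m := by
    intro u hu m
    have hs : HasDerivAt (fun t : ℂ => (Pi.single m t : Fin d → ℂ)) (Pi.single m 1) 0 := by
      rw [hasDerivAt_pi]
      intro i
      by_cases hi : i = m
      · subst hi; simp only [Pi.single_eq_same]; exact hasDerivAt_id' (0 : ℂ)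
      · simpa [Pi.single_apply, hi] using hasDerivAt_const (0 : ℂ) (0 : ℂ)
    have d1 := aux_der n (fun j => conj (h u j)) _ _ (hB m) (by simp [h0])
    have d2 := aux_der n (fun j => conj (u j)) _ _ hs (by simp)
    have hev : (fun t : ℂ => ∏ j, (1 - conj (h u j) * h (Pi.single m t) j) ^ n j) =ᶠ[nhds 0]
        (fun t : ℂ => ∏ j, (1 - conj (u j) * (Pi.single m t : Fin d → ℂ) j) ^ n j) := by
      filter_upwards [Metric.ball_mem_nhds (0 : ℂ) one_pos] with t ht
      have ht : ‖t‖ < 1 := by simpa using ht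
      have := H (Pi.single m t) u (fun j => by
        by_cases hi : j = m
        · subst hi; simpa using ht
        · simp [Pi.single_apply, hi]) hu
      have := congrArg conj this
      simpa [map_prod] using this
    have e := d1.unique (d2.congr_of_eventuallyEq hev)
    have e := congrArg conj (neg_injective e)
    simp only [map_sum, map_mul, Complex.conj_conj, map_natCast] at e
    rw [Finset.sum_eq_single m (fun j _ hj => by simp [Pi.single_apply, hj]) (by simp)
      (f := fun x => (n x : ℂ) * u x * conj ((Pi.single m 1 : Fin d → ℂ) x))] at e
    simp only [Pi.single_eq_same, map_one, mul_one] at e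
    rw [← e]
    exact Finset.sum_congr rfl fun j _ => by ring
  -- linearity
  let e2 : Fin d → Fin d → ℂ := fun m => Pi.single m (1/2)
  have he2 : ∀ m j, ‖e2 m j‖ < 1 := by
    intro m j
    by_cases hi : j = m
    · subst hi; simp [e2]; norm_num
    · simp [e2, Pi.single_apply, hi]
  let A : Matrix (Fin d) (Fin d) ℂ := Matrix.of fun j m => 2 * h (e2 m) j
  let Q : Matrix (Fin d) (Fin d) ℂ := Matrix.of fun m j => (n m : ℂ)⁻¹ * ((n j : ℂ) * conj (B m j))
  have hQ : ∀ u : Fin d → ℂ, (∀ j, ‖u j‖ < 1) → Q.mulVec (h u) = u := by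
    intro u hu
    ext m
    simp only [Matrix.mulVec, dotProduct, Q, Matrix.of_apply, mul_assoc, ← Finset.mul_sum]
    have := hlin u hu m
    simp only [mul_assoc] at this
    rw [this]
    field_simp [hn0 m]
  have hQA : Q * A = 1 := by
    ext i m
    have := congrFun (hQ (e2 m) (he2 m)) i
    simp only [Matrix.mulVec, dotProduct] at this
    rw [Matrix.mul_apply]
    simp only [A, Matrix.of_apply]
    have h3 : ∑ j, Q i j * (2 * h (e2 m) j) = 2 * ∑ j, Q i j * h (e2 m) j := by
      rw [Finset.mul_sum]; exact Finset.sum_congr rfl fun j _ => by ring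
    rw [h3, this]
    by_cases hi : i = m
    · subst hi; simp [e2]
    · simp [e2, hi]
  have hAQ : A * Q = 1 := mul_eq_one_comm.1 hQA
  have hA : ∀ u : Fin d → ℂ, (∀ j, ‖u j‖ < 1) → h u = A.mulVec u := by
    intro u hu
    conv_rhs => rw [← hQ u hu]
    rw [Matrix.mulVec_mulVec, hAQ, Matrix.one_mulVec]
  -- dichotomy
  have hdich : ∀ (m j : Fin d) (u : Fin d → ℂ), A.mulVec u j * conj (A j m) = 0 ∨
      A.mulVec u j * conj (A j m) = u m := by
    intro m j u
    have key := aux_poly n hn (fun j => A.mulVec u j * conj (A j m) / 2) (u m / 2) (n m)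
      (1 / (‖u‖ + 1)) (by positivity) (by
        intro t ht ht'
        have hsm : ∀ j, ‖((t : ℂ) • u) j‖ < 1 := by
          intro j
          rw [lt_div_iff₀ (by positivity)] at ht'
          have h1 := norm_le_pi_norm u j
          simp only [Pi.smul_apply, smul_eq_mul, norm_mul, Complex.norm_real, Real.norm_eq_abs, abs_of_pos ht]
          nlinarith
        have := H (e2 m) ((t : ℂ) • u) (he2 m) hsm
        rw [hA _ hsm, Matrix.mulVec_smul] at this
        rw [Finset.prod_eq_single (a := m) (fun j _ hj => by simp [e2, Pi.single_apply, hj]) (by simp)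
          (f := fun j => (1 - ((t : ℂ) • u) j * conj (e2 m j)) ^ n j)] at this
        have hAe : ∀ j, h (e2 m) j = A j m / 2 := by intro j; simp [A]
        simp only [hAe, Pi.smul_apply, smul_eq_mul, e2, Pi.single_eq_same, map_div₀, map_ofNat, map_one] at this
        convert this using 1
        · exact Finset.prod_congr rfl fun j _ => by ring
        · ring) j
    rcases key with k | k
    · left; simpa using k
    · right; simpa using k
  have hcol : ∀ m, ∃ j, A j m ≠ 0 := by
    intro m
    by_contra! hc
    have := congrFun (congrFun hQA m) m
    rw [Matrix.mul_apply] at this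
    simp [hc] at this
  have hnorm : ∀ j m, A j m ≠ 0 → A j m * conj (A j m) = 1 := by
    intro j m hjm
    rcases hdich m j (Pi.single m 1) with k | k
    · simp [hjm] at k
    · simpa using k
  have hrow : ∀ j m k, A j m ≠ 0 → k ≠ m → A j k = 0 := by
    intro j m k hjm hkm
    have hs : ∀ s : ℂ, s * A j k = 0 ∨ A j m + s * A j k = 0 := by
      intro s
      have hmv : A.mulVec (Pi.single m 1 + s • Pi.single k 1) j = A j m + s * A j k := by
        simp [Matrix.mulVec_add, Matrix.mulVec_smul]
      have hum : (Pi.single m 1 + s • Pi.single k 1 : Fin d → ℂ) m = 1 := by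
        simp [hkm.symm]
      have := hdich m j (Pi.single m 1 + s • Pi.single k 1)
      rw [hmv, hum] at this
      rcases this with k' | k'
      · right
        simpa [hjm] using k'
      · left
        have h1 := hnorm j m hjm
        have h2 : (s * A j k) * conj (A j m) = 0 := by linear_combination k' - h1
        rcases mul_eq_zero.1 h2 with h3 | h3
        · exact h3
        · simp [hjm] at h3
    rcases hs 1 with k1 | k1
    · simpa using k1
    rcases hs 2 with k2 | k2
    · simpa using k2
    · linear_combination k2 - k1
  choose ψ hψ using hcol
  have hinj : Function.Injective ψ := by
    intro a b hab
    by_contra hne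
    have := hrow (ψ a) a b (hψ a) (Ne.symm hne)
    rw [hab] at this
    exact hψ b this
  let e : Equiv.Perm (Fin d) := Equiv.ofBijective ψ (Finite.injective_iff_bijective.1 hinj)
  have hne : ∀ j, A j (e.symm j) ≠ 0 := by
    intro j
    have h1 := hψ (e.symm j)
    have h2 : ψ (e.symm j) = j := e.apply_symm_apply j
    rwa [h2] at h1
  refine ⟨fun j => A j (e.symm j), e.symm, ?_, ?_⟩
  · intro j
    have := hnorm j _ (hne j)
    rw [Complex.mul_conj, Complex.normSq_eq_norm_sq] at this
    have h1 : ‖A j (e.symm j)‖ ^ 2 = 1 := by exact_mod_cast this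
    nlinarith [norm_nonneg (A j (e.symm j))]
  · intro u hu j
    rw [hA u hu]
    simp only [Matrix.mulVec, dotProduct]
    exact Finset.sum_eq_single _ (fun k _ hk => by rw [hrow j _ k (hne j) hk, zero_mul]) (by simp)

lemma aux_ne {a b : ℂ} (ha : ‖a‖ < 1) (hb : ‖b‖ < 1) : 1 - a * conj b ≠ 0 := by
  intro h
  have h1 : a * conj b = 1 := by linear_combination -h
  have h2 := congrArg norm h1
  simp only [norm_mul, RCLike.norm_conj, norm_one] at h2
  nlinarith [norm_nonneg a, norm_nonneg b]

theorem stmt_15 (d : ℕ) (hd : 1 ≤ d) (ℓ : Fin d → ℕ)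
    (f : (Fin d → ℂ) → ℂ) (g : (Fin d → ℂ) → Fin d → ℂ)
    (hf : AnalyticOnNhd ℂ f {z : Fin d → ℂ | ∀ j, ‖z j‖ < 1})
    (hg : AnalyticOnNhd ℂ g {z : Fin d → ℂ | ∀ j, ‖z j‖ < 1})
    (hgmap : ∀ z ∈ {z : Fin d → ℂ | ∀ j, ‖z j‖ < 1}, ∀ κ, ‖g z κ‖ < 1)
    (K : (Fin d → ℂ) → (Fin d → ℂ) → ℂ)
    (hK : ∀ w u : Fin d → ℂ, K w u = ∏ j, ((1 - u j * conj (w j)) ^ (ℓ j + 2))⁻¹)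
    (heq : ∀ z ∈ {z : Fin d → ℂ | ∀ j, ‖z j‖ < 1},
      ∀ u ∈ {u : Fin d → ℂ | ∀ j, ‖u j‖ < 1},
        conj (f z) * f u * K (g z) (g u) = K z u) :
    ∃ (c : ℂ) (a : Fin d → ℂ) (θ : Fin d → ℂ) (φ : Equiv.Perm (Fin d)),
      ‖c‖ = 1 ∧ (∀ κ, ‖a κ‖ = 1) ∧ (∀ j, ‖θ j‖ < 1) ∧
      (∀ z ∈ {z : Fin d → ℂ | ∀ j, ‖z j‖ < 1},
        f z = c * ∏ j, (((1 - ‖θ j‖ ^ 2) ^ ((1 : ℝ) + (ℓ j : ℝ) / 2) : ℝ) : ℂ) /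
          (1 - a j * conj (θ j) * z (φ j)) ^ (ℓ j + 2)) ∧
      (∀ z ∈ {z : Fin d → ℂ | ∀ j, ‖z j‖ < 1}, ∀ κ,
        g z κ = a κ * (conj (a κ) * θ κ - z (φ κ)) / (1 - a κ * conj (θ κ) * z (φ κ))) := by
  simp only [Set.mem_ofPred_eq] at *
  have h0D : ∀ j : Fin d, ‖(0 : Fin d → ℂ) j‖ < 1 := by simp
  -- cleared identity
  have hid : ∀ z u : Fin d → ℂ, (∀ j, ‖z j‖ < 1) → (∀ j, ‖u j‖ < 1) →
      conj (f z) * f u * ∏ j, (1 - u j * conj (z j)) ^ (ℓ j + 2) =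
        ∏ j, (1 - g u j * conj (g z j)) ^ (ℓ j + 2) := by
    intro z u hz hu
    have h1 := heq z hz u hu
    rw [hK, hK, Finset.prod_inv_distrib, Finset.prod_inv_distrib] at h1
    have n1 : ∏ j, (1 - u j * conj (z j)) ^ (ℓ j + 2) ≠ 0 :=
      Finset.prod_ne_zero_iff.2 fun j _ => pow_ne_zero _ (aux_ne (hu j) (hz j))
    have n2 : ∏ j, (1 - g u j * conj (g z j)) ^ (ℓ j + 2) ≠ 0 :=
      Finset.prod_ne_zero_iff.2 fun j _ => pow_ne_zero _ (aux_ne (hgmap u hu j) (hgmap z hz j))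
    field_simp at h1
    exact h1
  set b : Fin d → ℂ := g 0 with hbdef
  have hb : ∀ j, ‖b j‖ < 1 := hgmap 0 h0D
  have hf0 : ∀ u : Fin d → ℂ, (∀ j, ‖u j‖ < 1) →
      conj (f 0) * f u = ∏ j, (1 - g u j * conj (b j)) ^ (ℓ j + 2) := by
    intro u hu
    have := hid 0 u h0D hu
    simpa using this
  have hbb : ∀ j, 1 - b j * conj (b j) ≠ 0 := fun j => aux_ne (hb j) (hb j)
  have hf00 : conj (f 0) * f 0 = ∏ j, (1 - b j * conj (b j)) ^ (ℓ j + 2) := hf0 0 h0D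
  have hff : conj (f 0) * f 0 ≠ 0 := by
    rw [hf00]
    exact Finset.prod_ne_zero_iff.2 fun j _ => pow_ne_zero _ (hbb j)
  have hfne : f 0 ≠ 0 := right_ne_zero_of_mul hff
  have hcfne : conj (f 0) ≠ 0 := left_ne_zero_of_mul hff
  let h : (Fin d → ℂ) → Fin d → ℂ := fun u j => (g u j - b j) / (1 - g u j * conj (b j))
  have hh0 : h 0 = 0 := by ext j; simp [h, ← hbdef]
  have hgd : DifferentiableAt ℂ g 0 := (hg 0 h0D).differentiableAt
  have hhd : DifferentiableAt ℂ h 0 := by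
    rw [differentiableAt_pi]
    intro j
    have hgj := differentiableAt_pi.1 hgd j
    have hden : DifferentiableAt ℂ (fun u => 1 - g u j * conj (b j)) 0 :=
      (hgj.mul_const _).const_sub 1
    have hnum : DifferentiableAt ℂ (fun u => g u j - b j) 0 := hgj.sub_const (b j)
    have hq := hnum.mul (hden.inv (hbb j))
    simp only [h, div_eq_mul_inv]
    exact hq
  have hgb : ∀ u : Fin d → ℂ, (∀ j, ‖u j‖ < 1) → ∀ j, 1 - g u j * conj (b j) ≠ 0 :=
    fun u hu j => aux_ne (hgmap u hu j) (hb j)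
  have hH : ∀ z u : Fin d → ℂ, (∀ j, ‖z j‖ < 1) → (∀ j, ‖u j‖ < 1) →
      ∏ j, (1 - h u j * conj (h z j)) ^ (ℓ j + 2) = ∏ j, (1 - u j * conj (z j)) ^ (ℓ j + 2) := by
    intro z u hz hu
    have hpt : ∀ j, (1 - h u j * conj (h z j)) * ((1 - g u j * conj (b j)) *
        conj (1 - g z j * conj (b j))) =
        (1 - b j * conj (b j)) * (1 - g u j * conj (g z j)) := by
      intro j
      have n1 := hgb u hu j
      have n2 : conj (1 - g z j * conj (b j)) ≠ 0 := by
        simpa only [ne_eq, map_eq_zero] using hgb z hz j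
      simp only [h, map_div₀]
      have : 1 - (g u j - b j) / (1 - g u j * conj (b j)) * (conj (g z j - b j) / conj (1 - g z j * conj (b j))) = ((1 - g u j * conj (b j)) * conj (1 - g z j * conj (b j)) - (g u j - b j) * conj (g z j - b j)) / ((1 - g u j * conj (b j)) * conj (1 - g z j * conj (b j))) := by
        rw [div_mul_div_comm, sub_div, div_self (mul_ne_zero n1 n2)]
      rw [this, div_mul_cancel₀ _ (mul_ne_zero n1 n2)]
      simp only [map_sub, map_mul, map_one, Complex.conj_conj]
      ring
    have hprod : (∏ j, (1 - h u j * conj (h z j)) ^ (ℓ j + 2)) *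
        ((∏ j, (1 - g u j * conj (b j)) ^ (ℓ j + 2)) *
          conj (∏ j, (1 - g z j * conj (b j)) ^ (ℓ j + 2))) =
        (∏ j, (1 - b j * conj (b j)) ^ (ℓ j + 2)) *
          ∏ j, (1 - g u j * conj (g z j)) ^ (ℓ j + 2) := by
      simp only [map_prod, map_pow, ← Finset.prod_mul_distrib, ← mul_pow]
      exact Finset.prod_congr rfl fun j _ => by rw [hpt j]
    rw [← hf0 u hu, ← hf0 z hz, ← hf00, ← hid z u hz hu] at hprod
    have n1 : conj (f 0) * f u ≠ 0 := by
      rw [hf0 u hu]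
      exact Finset.prod_ne_zero_iff.2 fun j _ => pow_ne_zero _ (hgb u hu j)
    have n2 : conj (conj (f 0) * f z) ≠ 0 := by
      rw [hf0 z hz]
      simp only [ne_eq, map_eq_zero]
      exact Finset.prod_ne_zero_iff.2 fun j _ => pow_ne_zero _ (hgb z hz j)
    apply mul_right_cancel₀ (mul_ne_zero n1 n2)
    rw [hprod]
    simp only [map_mul, Complex.conj_conj]
    ring
  obtain ⟨α, φ, hα, hlin⟩ := aux_key (fun j => ℓ j + 2) (fun j => by omega) h hhd hh0 hH
  have hden : ∀ z : Fin d → ℂ, (∀ j, ‖z j‖ < 1) → ∀ j, 1 - (-α j) * conj (b j) * z (φ j) ≠ 0 := by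
    intro z hz j
    have := aux_ne (a := -α j * z (φ j)) (b := b j) (by simpa [hα] using hz (φ j)) (hb j)
    intro h'
    exact this (by linear_combination h')
  have hgform : ∀ z : Fin d → ℂ, (∀ j, ‖z j‖ < 1) → ∀ j,
      g z j * (1 - (-α j) * conj (b j) * z (φ j)) = b j + α j * z (φ j) := by
    intro z hz j
    have h1 := hlin z hz j
    simp only [h] at h1
    rw [div_eq_iff (hgb z hz j)] at h1
    linear_combination h1
  have hpos : ∀ j, 0 < 1 - ‖b j‖ ^ 2 := fun j => by
    have := hb j
    have := norm_nonneg (b j)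
    nlinarith
  have hbn : ∀ j, 1 - b j * conj (b j) = ((1 - ‖b j‖ ^ 2 : ℝ) : ℂ) := by
    intro j
    rw [Complex.mul_conj, Complex.normSq_eq_norm_sq]; push_cast; ring
  let R : ℝ := ∏ j, (1 - ‖b j‖ ^ 2) ^ ((1 : ℝ) + (ℓ j : ℝ) / 2)
  have hRpos : 0 < R := Finset.prod_pos fun j _ => Real.rpow_pos_of_pos (hpos j) _
  have hR2 : R * R = ∏ j, (1 - ‖b j‖ ^ 2) ^ (ℓ j + 2) := by
    simp only [R, ← Finset.prod_mul_distrib]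
    refine Finset.prod_congr rfl fun j _ => ?_
    rw [← Real.rpow_add (hpos j), ← Real.rpow_natCast _ (ℓ j + 2)]
    congr 1
    push_cast
    ring
  have hR2c : (R : ℂ) * R = ∏ j, (1 - b j * conj (b j)) ^ (ℓ j + 2) := by
    simp only [hbn]
    exact_mod_cast congrArg (fun x : ℝ => (x : ℂ)) hR2
  have hfR : ‖f 0‖ = R := by
    have h1 : conj (f 0) * f 0 = (R : ℂ) * R := by rw [hf00, hR2c]
    have h2 := congrArg norm h1
    simp only [norm_mul, RCLike.norm_conj, Complex.norm_real, Real.norm_eq_abs, abs_of_pos hRpos] at h2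
    nlinarith [norm_nonneg (f 0)]
  refine ⟨R / conj (f 0), fun j => -α j, b, φ, ?_, ?_, hb, ?_, ?_⟩
  · rw [norm_div, RCLike.norm_conj, hfR, Complex.norm_real, Real.norm_eq_abs, abs_of_pos hRpos]
    exact div_self hRpos.ne'
  · intro j; simpa using hα j
  · intro z hz
    rw [Finset.prod_div_distrib]
    have hRc : ∏ j, (((1 - ‖b j‖ ^ 2) ^ ((1 : ℝ) + (ℓ j : ℝ) / 2) : ℝ) : ℂ) = R := by
      simp only [R]; push_cast; rfl
    rw [hRc]
    have nD : ∏ j, (1 - (-α j) * conj (b j) * z (φ j)) ^ (ℓ j + 2) ≠ 0 :=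
      Finset.prod_ne_zero_iff.2 fun j _ => pow_ne_zero _ (hden z hz j)
    have h1 : conj (f 0) * f z * ∏ j, (1 - (-α j) * conj (b j) * z (φ j)) ^ (ℓ j + 2) =
        (R : ℂ) * R := by
      rw [hf0 z hz, hR2c, ← Finset.prod_mul_distrib]
      refine Finset.prod_congr rfl fun j _ => ?_
      rw [← mul_pow]
      congr 1
      linear_combination (-conj (b j)) * hgform z hz j
    rw [div_mul_div_comm, eq_div_iff (mul_ne_zero hcfne nD)]
    linear_combination h1
  · intro z hz j
    rw [eq_div_iff (hden z hz j), hgform z hz j]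
    have : α j * conj (α j) = 1 := by
      rw [Complex.mul_conj, Complex.normSq_eq_norm_sq, hα]; simp
    simp only [map_neg]
    linear_combination (-b j) * this
end

section
/- Let d ≥ 1, ℓ ∈ ℤ_{≥0}^d, let {U₁, U₂} be a partition of {1,…,d}, and let q_j ∈ 𝕋 for j ∈ U₂. Let f(z) = c·∏_{j=1}^d (1 − z_j·conj(w_j))^{−(ℓ_j+2)} for some c ∈ ℂ and w ∈ 𝔻^d, and let g = (g₁,…,g_d) : 𝔻^d → 𝔻^d be such that each g_κ depends only on z_κ and: for κ ∈ U₁, either g_κ is constant with value in 𝔻, or g_κ(z) = G_κ + E_κ/(z_κ + F_κ) with E_κ ≠ 0 and |(G_κ·F_κ + E_κ)·conj(F_κ) − G_κ| + |E_κ| ≤ |F_κ|² − 1; for κ ∈ U₂, either g_κ is constant with value in 𝔻, or g_κ(z) = α_κ + β_κ·q_κ·z_κ/(1 − α_κ·q_κ·z_κ) with β_κ ≠ 0 and |α_κ + conj(α_κ)·(β_κ − α_κ²)| + |β_κ| ≤ 1 − |α_κ|². Then there exists a constant R > 0 such that for every analytic function h : 𝔻^d → ℂ, ∫_{𝔻^d}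 |f(z)·h(g(z))|² ∏_{j=1}^d (1+ℓ_j)(1−|z_j|²)^{ℓ_j} dA(z₁)⋯dA(z_d) ≤ R·∫_{𝔻^d} |h(x)|² ∏_{j=1}^d (1+ℓ_j)(1−|x_j|²)^{ℓ_j} dA(x₁)⋯dA(x_d) (as an inequality in [0,∞]). -/
open MeasureTheory Complex ComplexConjugate

/-- The normalized area measure on `ℂ` (planar Lebesgue measure divided by `π`). -/
noncomputable def dA : Measure ℂ := (ENNReal.ofReal Real.pi)⁻¹ • volume

open Metric Set

instance dA_sigmaFinite : SigmaFinite dA := by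
  unfold dA
  have h : (ENNReal.ofReal Real.pi)⁻¹ ≠ ⊤ := by
    simp [Real.pi_pos]
  lift (ENNReal.ofReal Real.pi)⁻¹ to NNReal using h with c
  exact inferInstanceAs (SigmaFinite (c • (volume : Measure ℂ)))

/-- One-variable weight, extended by zero outside of the disk. -/
noncomputable def wt1 (l : ℕ) (ξ : ℂ) : ENNReal :=
  (ball (0 : ℂ) 1).indicator (fun ξ => ENNReal.ofReal ((1 + (l : ℝ)) * (1 - ‖ξ‖ ^ 2) ^ l)) ξ

lemma wt1_measurable (l : ℕ) : Measurable (wt1 l) := by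
  unfold wt1
  refine Measurable.indicator ?_ measurableSet_ball
  fun_prop

lemma schwarz_bd (φ : ℂ → ℂ) (hd : DifferentiableOn ℂ φ (ball 0 1))
    (hm : MapsTo φ (ball 0 1) (ball 0 1)) :
    ∃ C : ℝ, 0 < C ∧ ∀ z ∈ ball (0 : ℂ) 1, 1 - ‖z‖ ^ 2 ≤ C * (1 - ‖φ z‖ ^ 2) := by
  set a := φ 0 with ha
  have ha1 : ‖a‖ < 1 := by simpa using hm (mem_ball_self one_pos)
  have hden : ∀ u : ℂ, ‖u‖ < 1 → 1 - ‖a‖ ≤ ‖1 - conj a * u‖ := by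
    intro u hu
    have h1 : ‖(1 : ℂ)‖ - ‖conj a * u‖ ≤ ‖1 - conj a * u‖ := norm_sub_norm_le _ _
    rw [norm_mul, RCLike.norm_conj, norm_one] at h1
    nlinarith [norm_nonneg a, norm_nonneg u]
  have hden0 : ∀ u : ℂ, ‖u‖ < 1 → 1 - conj a * u ≠ 0 := by
    intro u hu h
    have := hden u hu
    rw [h, norm_zero] at this
    linarith
  have hid : ∀ u : ℂ, ‖1 - conj a * u‖ ^ 2 - ‖u - a‖ ^ 2 = (1 - ‖a‖ ^ 2) * (1 - ‖u‖ ^ 2) := by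
    intro u
    simp only [← Complex.normSq_eq_norm_sq, Complex.normSq_apply]
    simp
    ring
  have hid2 : ∀ u : ℂ, ‖u‖ < 1 → (1 - ‖(u - a) / (1 - conj a * u)‖ ^ 2) * ‖1 - conj a * u‖ ^ 2
      = (1 - ‖a‖ ^ 2) * (1 - ‖u‖ ^ 2) := by
    intro u hu
    rw [← hid, norm_div]
    have : ‖1 - conj a * u‖ ≠ 0 := norm_ne_zero_iff.2 (hden0 u hu)
    generalize ‖1 - conj a * u‖ = t at this
    field_simp
  have hapos : 0 < 1 - ‖a‖ ^ 2 := by nlinarith [norm_nonneg a]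
  have hm' : MapsTo (fun z => (φ z - a) / (1 - conj a * φ z)) (ball 0 1) (ball 0 1) := by
    intro z hz
    have hu : ‖φ z‖ < 1 := by simpa using hm hz
    have h2 := hid2 _ hu
    have hp : 0 < (1 - ‖a‖ ^ 2) * (1 - ‖φ z‖ ^ 2) :=
      mul_pos hapos (by nlinarith [norm_nonneg (φ z)])
    rw [← h2] at hp
    have := pos_of_mul_pos_left hp (by positivity)
    rw [mem_ball_zero_iff]
    nlinarith [norm_nonneg ((φ z - a) / (1 - conj a * φ z))]
  have hd' : DifferentiableOn ℂ (fun z => (φ z - a) / (1 - conj a * φ z)) (ball 0 1) := by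
    refine DifferentiableOn.div (hd.sub_const _) ((hd.const_mul _).const_sub _) ?_
    intro z hz
    exact hden0 _ (by simpa using hm hz)
  refine ⟨(1 - ‖a‖ ^ 2) / (1 - ‖a‖) ^ 2, div_pos hapos (by nlinarith), ?_⟩
  intro z hz
  have hu : ‖φ z‖ < 1 := by simpa using hm hz
  have h0 : (fun z => (φ z - a) / (1 - conj a * φ z)) 0 = 0 := by simp [ha]
  have hs := Complex.norm_le_norm_of_mapsTo_ball hd' (hm'.mono_right ball_subset_closedBall) h0 
    (by simpa using hz)
  have h2 := hid2 _ hu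
  have h3 := hden _ hu
  have h4 : 0 < 1 - ‖a‖ := by linarith
  rw [div_mul_eq_mul_div, le_div_iff₀ (by positivity), ← h2]
  have h5 : ‖(φ z - a) / (1 - conj a * φ z)‖ < 1 := by simpa using hm' hz
  gcongr
  nlinarith [norm_nonneg ((φ z - a) / (1 - conj a * φ z))]

lemma det_mul_c (a : ℂ) :
    |((ContinuousLinearMap.toSpanSingleton ℂ a : ℂ →L[ℂ] ℂ).restrictScalars ℝ).det| = ‖a‖ ^ 2 := by
  have : ((ContinuousLinearMap.toSpanSingleton ℂ a : ℂ →L[ℂ] ℂ).restrictScalars ℝ).det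
      = Algebra.norm ℝ a := by
    rw [Algebra.norm_apply, ContinuousLinearMap.det]
    congr 1
    ext
    simp [mul_comm]
  rw [this, Algebra.norm_complex_apply, Complex.normSq_eq_norm_sq]
  simp

lemma univ_bd (l : ℕ) (φ φ' : ℂ → ℂ) (hd : ∀ z ∈ ball (0 : ℂ) 1, HasDerivAt φ (φ' z) z)
    (hm : MapsTo φ (ball 0 1) (ball 0 1)) (hi : InjOn φ (ball 0 1)) (m : ℝ) (hm0 : 0 < m)
    (hm1 : ∀ z ∈ ball (0 : ℂ) 1, m ≤ ‖φ' z‖ ^ 2) :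
    ∃ R : ℝ, 0 < R ∧ ∀ u : ℂ → ENNReal,
      ∫⁻ z, u (φ z) * wt1 l z ∂dA ≤ ENNReal.ofReal R * ∫⁻ z, u z * wt1 l z ∂dA := by
  obtain ⟨C, hC, hC1⟩ := schwarz_bd φ
    (fun z hz => (hd z hz).differentiableAt.differentiableWithinAt) hm
  refine ⟨C ^ l / m, by positivity, fun u => ?_⟩
  unfold dA
  rw [lintegral_smul_measure, lintegral_smul_measure, smul_eq_mul, smul_eq_mul, mul_left_comm]
  gcongr
  have hcv := lintegral_image_eq_lintegral_abs_det_fderiv_mul (volume : Measure ℂ)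
    (s := ball (0 : ℂ) 1) measurableSet_ball
    (f' := fun z => (ContinuousLinearMap.toSpanSingleton ℂ (φ' z) : ℂ →L[ℂ] ℂ).restrictScalars ℝ)
    (fun z hz => ((hd z hz).hasFDerivAt.restrictScalars ℝ).hasFDerivWithinAt) hi
    (fun z => u z * wt1 l z)
  simp only [det_mul_c] at hcv
  calc ∫⁻ z, u (φ z) * wt1 l z 
      = ∫⁻ z in ball (0:ℂ) 1, u (φ z) * wt1 l z := by
        rw [← lintegral_indicator measurableSet_ball]
        congr 1; ext z
        by_cases hz : z ∈ ball (0:ℂ) 1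
        · rw [indicator_of_mem hz]
        · rw [indicator_of_notMem hz, wt1, indicator_of_notMem hz, mul_zero]
    _ ≤ ∫⁻ z in ball (0:ℂ) 1, ENNReal.ofReal (C ^ l / m) * 
          (ENNReal.ofReal (‖φ' z‖ ^ 2) * (u (φ z) * wt1 l (φ z))) := by
        refine setLIntegral_mono' measurableSet_ball fun z hz => ?_
        rw [wt1, wt1, indicator_of_mem hz, indicator_of_mem (hm hz)]
        rw [mul_left_comm (ENNReal.ofReal (‖φ' z‖ ^ 2)), 
          mul_left_comm (ENNReal.ofReal (C ^ l / m))]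
        have hz' : ‖z‖ < 1 := by simpa using hz
        have hu : ‖φ z‖ < 1 := by simpa using hm hz
        have hz2 : 0 ≤ 1 - ‖z‖ ^ 2 := by nlinarith [norm_nonneg z]
        have hu2 : 0 ≤ 1 - ‖φ z‖ ^ 2 := by nlinarith [norm_nonneg (φ z)]
        rw [← ENNReal.ofReal_mul (by positivity), ← ENNReal.ofReal_mul (by positivity)]
        refine mul_le_mul' le_rfl (ENNReal.ofReal_le_ofReal ?_)
        have e1 : (1 - ‖z‖ ^ 2) ^ l ≤ C ^ l * (1 - ‖φ z‖ ^ 2) ^ l := by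
          rw [← mul_pow]
          exact pow_le_pow_left₀ hz2 (hC1 z hz) l
        have e2 : 1 ≤ ‖φ' z‖ ^ 2 / m := (one_le_div hm0).2 (hm1 z hz)
        calc (1 + (l:ℝ)) * (1 - ‖z‖ ^ 2) ^ l ≤ (1 + (l:ℝ)) * (C ^ l * (1 - ‖φ z‖ ^ 2) ^ l) := by gcongr
          _ ≤ (1 + (l:ℝ)) * (C ^ l * (1 - ‖φ z‖ ^ 2) ^ l) * (‖φ' z‖ ^ 2 / m) := 
            le_mul_of_one_le_right (by positivity) e2
          _ = _ := by ring
    _ = ENNReal.ofReal (C ^ l / m) * ∫⁻ z in φ '' ball (0:ℂ) 1, u z * wt1 l z := by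
        rw [hcv, lintegral_const_mul' _ _ (by simp)]
    _ ≤ _ := by
        gcongr
        exact Measure.restrict_le_self

lemma circle_bd (u : ℂ → ℂ) (k : ℂ) (ρ : ℝ) (hρ : 0 < ρ)
    (hu : DifferentiableOn ℂ u (closedBall k ρ)) :
    ENNReal.ofReal (2 * Real.pi) * ‖u k‖ₑ ^ 2 ≤
      ∫⁻ θ in Ioo (-Real.pi) Real.pi, ‖u (circleMap k ρ θ)‖ₑ ^ 2 := by
  have h1 : DiffContOnCl ℂ (fun z => u z ^ 2) (ball k |ρ|) := by
    apply DifferentiableOn.diffContOnCl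
    rw [abs_of_pos hρ, closure_ball _ hρ.ne']
    exact hu.pow 2
  have h2 := h1.circleAverage
  rw [Real.circleAverage_def] at h2
  have h3 : ∫ θ in (0:ℝ)..(2 * Real.pi), u (circleMap k ρ θ) ^ 2
      = ∫ θ in Ioo (-Real.pi) Real.pi, u (circleMap k ρ θ) ^ 2 := by
    have hp : Function.Periodic (fun θ => u (circleMap k ρ θ) ^ 2) (2 * Real.pi) := by
      intro θ
      simp only [periodic_circleMap k ρ θ]
    have := hp.intervalIntegral_add_eq 0 (-Real.pi)
    rw [zero_add] at this
    rw [this, intervalIntegral.integral_of_le (by linarith [Real.pi_pos]),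
      integral_Ioc_eq_integral_Ioo]
    congr 3
    ring
  rw [h3] at h2
  have hpi : (0:ℝ) < 2 * Real.pi := by positivity
  have h4 : ∫ θ in Ioo (-Real.pi) Real.pi, u (circleMap k ρ θ) ^ 2 = (2 * Real.pi) • (u k ^ 2) := by
    rw [← h2, smul_smul, mul_inv_cancel₀ hpi.ne', one_smul]
  have h5 := enorm_integral_le_lintegral_enorm (μ := volume.restrict (Ioo (-Real.pi) Real.pi))
    (fun θ => u (circleMap k ρ θ) ^ 2)
  rw [h4, enorm_smul] at h5
  simp only [enorm_pow] at h5
  rwa [Real.enorm_of_nonneg hpi.le] at h5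

lemma area_bd (u : ℂ → ℂ) (k : ℂ) (r : ℝ) (hr : 0 < r)
    (hu : DifferentiableOn ℂ u (closedBall k r)) :
    ENNReal.ofReal (r / 2 * (r / 2) * (2 * Real.pi)) * ‖u k‖ₑ ^ 2 ≤
      ∫⁻ z in ball k r, ‖u z‖ₑ ^ 2 := by
  have hsym : ∀ p : ℝ × ℝ, k + Complex.polarCoord.symm p = circleMap k p.1 p.2 := by
    intro p
    rw [Complex.polarCoord_symm_apply, circleMap, Complex.exp_mul_I]
    simp
  calc ENNReal.ofReal (r / 2 * (r / 2) * (2 * Real.pi)) * ‖u k‖ₑ ^ 2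
      = ∫⁻ ρ in Ioo (r / 2) r, ENNReal.ofReal (r / 2) *
          (ENNReal.ofReal (2 * Real.pi) * ‖u k‖ₑ ^ 2) := by
        rw [setLIntegral_const, Real.volume_Ioo, ENNReal.ofReal_mul (by positivity),
          ENNReal.ofReal_mul (by positivity), show r - r / 2 = r / 2 by ring]
        ring
    _ ≤ ∫⁻ ρ in Ioo (r / 2) r, ∫⁻ θ in Ioo (-Real.pi) Real.pi,
          ENNReal.ofReal (r / 2) * ‖u (circleMap k ρ θ)‖ₑ ^ 2 := by
        refine setLIntegral_mono' measurableSet_Ioo fun ρ hρ => ?_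
        rw [lintegral_const_mul' _ _ (by simp)]
        gcongr
        exact circle_bd u k ρ (by linarith [hρ.1])
          (hu.mono (closedBall_subset_closedBall hρ.2.le))
    _ = ∫⁻ p in Ioo (r / 2) r ×ˢ Ioo (-Real.pi) Real.pi,
          ENNReal.ofReal (r / 2) * ‖u (circleMap k p.1 p.2)‖ₑ ^ 2 := by
        rw [Measure.volume_eq_prod, ← Measure.prod_restrict, lintegral_prod]
        rw [Measure.prod_restrict]
        refine AEMeasurable.const_mul ?_ _
        refine AEMeasurable.pow_const (AEMeasurable.enorm ?_) _
        refine ContinuousOn.aemeasurable ?_ (measurableSet_Ioo.prod measurableSet_Ioo)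
        refine hu.continuousOn.comp (t := closedBall k r) ?_ ?_
        · apply Continuous.continuousOn
          simp only [circleMap]
          fun_prop
        · rintro ⟨ρ, θ⟩ ⟨h1, h2⟩
          simp only [mem_Ioo] at h1
          simp only [mem_closedBall, dist_eq_norm, circleMap_sub_center, norm_circleMap_zero]
          rw [abs_of_pos (by linarith)]
          exact h1.2.le
    _ ≤ ∫⁻ p in Ioo (r / 2) r ×ˢ Ioo (-Real.pi) Real.pi, ENNReal.ofReal p.1 •
          (ball k r).indicator (fun z => ‖u z‖ₑ ^ 2) (k + Complex.polarCoord.symm p) := by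
        refine setLIntegral_mono' (measurableSet_Ioo.prod measurableSet_Ioo) ?_
        rintro ⟨ρ, θ⟩ ⟨h1, h2⟩
        simp only [mem_Ioo] at h1
        rw [hsym, indicator_of_mem, smul_eq_mul]
        · gcongr
          exact h1.1.le
        · simp only [mem_ball, dist_eq_norm, circleMap_sub_center, norm_circleMap_zero]
          rw [abs_of_pos (by linarith)]
          exact h1.2
    _ ≤ ∫⁻ p in polarCoord.target, ENNReal.ofReal p.1 •
          (ball k r).indicator (fun z => ‖u z‖ₑ ^ 2) (k + Complex.polarCoord.symm p) := by
        apply lintegral_mono_set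
        rw [polarCoord_target]
        exact prod_mono (fun x hx => lt_trans (by positivity) hx.1) le_rfl
    _ = ∫⁻ y, (ball k r).indicator (fun z => ‖u z‖ₑ ^ 2) (k + y) :=
        Complex.lintegral_comp_polarCoord_symm
          (fun y => (ball k r).indicator (fun z => ‖u z‖ₑ ^ 2) (k + y))
    _ = _ := by
        rw [lintegral_add_left_eq_self (fun z => (ball k r).indicator (fun z => ‖u z‖ₑ ^ 2) z) k,
          lintegral_indicator measurableSet_ball]

lemma const_bd (l : ℕ) (k : ℂ) (hk : ‖k‖ < 1) :
    ∃ R : ℝ, 0 < R ∧ ∀ u : ℂ → ℂ, DifferentiableOn ℂ u (ball 0 1) →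
      ∫⁻ z, ‖u k‖ₑ ^ 2 * wt1 l z ∂dA ≤ ENNReal.ofReal R * ∫⁻ z, ‖u z‖ₑ ^ 2 * wt1 l z ∂dA := by
  set r := (1 - ‖k‖) / 2 with hr
  have hr0 : 0 < r := by rw [hr]; linarith
  have hs : ‖k‖ + r < 1 := by rw [hr]; linarith
  set m := (1 + (l:ℝ)) * (1 - (‖k‖ + r) ^ 2) ^ l with hm
  have hkr : 0 < 1 - (‖k‖ + r) ^ 2 := by nlinarith [norm_nonneg k]
  have hm0 : 0 < m := by positivity
  set a := r / 2 * (r / 2) * (2 * Real.pi) with ha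
  have ha0 : 0 < a := by positivity
  set b := (1 + (l:ℝ)) * Real.pi with hb
  have hb0 : 0 < b := by positivity
  refine ⟨b / (a * m), by positivity, fun u hu => ?_⟩
  unfold dA
  rw [lintegral_smul_measure, lintegral_smul_measure, smul_eq_mul, smul_eq_mul, mul_left_comm]
  gcongr
  have hsub : closedBall k r ⊆ ball 0 1 := by
    intro z hz
    rw [mem_closedBall, dist_eq_norm] at hz
    rw [mem_ball_zero_iff]
    have := norm_add_le (z - k) k
    rw [sub_add_cancel] at this
    linarith
  have h1 : ∫⁻ z, wt1 l z ≤ ENNReal.ofReal b := by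
    unfold wt1
    rw [lintegral_indicator measurableSet_ball]
    calc _ ≤ ∫⁻ z in ball (0:ℂ) 1, ENNReal.ofReal (1 + (l:ℝ)) := by
          refine setLIntegral_mono' measurableSet_ball fun z hz => ENNReal.ofReal_le_ofReal ?_
          have hz' : ‖z‖ < 1 := by simpa using hz
          refine mul_le_of_le_one_right (by positivity) (pow_le_one₀ ?_ ?_)
          · nlinarith [norm_nonneg z]
          · nlinarith [norm_nonneg z]
      _ = _ := by
          rw [setLIntegral_const, Complex.volume_ball, hb, ENNReal.ofReal_mul (by positivity)]
          simp [ENNReal.ofReal, NNReal.pi, Real.toNNReal_of_nonneg Real.pi_pos.le]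
          rfl
  have h2 : ENNReal.ofReal (a * m) * ‖u k‖ₑ ^ 2 ≤ ∫⁻ z, ‖u z‖ₑ ^ 2 * wt1 l z := by
    calc ENNReal.ofReal (a * m) * ‖u k‖ₑ ^ 2
        = (ENNReal.ofReal a * ‖u k‖ₑ ^ 2) * ENNReal.ofReal m := by
          rw [ENNReal.ofReal_mul ha0.le]; ring
      _ ≤ (∫⁻ z in ball k r, ‖u z‖ₑ ^ 2) * ENNReal.ofReal m := by
          gcongr
          exact area_bd u k r hr0 (hu.mono hsub)
      _ = ∫⁻ z in ball k r, ‖u z‖ₑ ^ 2 * ENNReal.ofReal m := by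
          rw [lintegral_mul_const' _ _ (by simp)]
      _ ≤ ∫⁻ z in ball k r, ‖u z‖ₑ ^ 2 * wt1 l z := by
          refine setLIntegral_mono' measurableSet_ball fun z hz => ?_
          have hz1 := hsub (ball_subset_closedBall hz)
          rw [wt1, indicator_of_mem hz1]
          refine mul_le_mul' le_rfl (ENNReal.ofReal_le_ofReal ?_)
          rw [hm]
          have : ‖z‖ ≤ ‖k‖ + r := by
            rw [mem_ball, dist_eq_norm] at hz
            have := norm_add_le (z - k) k
            rw [sub_add_cancel] at this
            linarith
          gcongr
      _ ≤ _ := setLIntegral_le_lintegral _ _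
  calc ∫⁻ z, ‖u k‖ₑ ^ 2 * wt1 l z = ‖u k‖ₑ ^ 2 * ∫⁻ z, wt1 l z := by
        rw [lintegral_const_mul _ (wt1_measurable l)]
    _ ≤ ‖u k‖ₑ ^ 2 * ENNReal.ofReal b := by gcongr
    _ = ENNReal.ofReal (b / (a * m)) * (ENNReal.ofReal (a * m) * ‖u k‖ₑ ^ 2) := by
        rw [← mul_assoc, ← ENNReal.ofReal_mul (by positivity), div_mul_cancel₀ _ (by positivity),
          mul_comm]
    _ ≤ _ := by gcongr

/-- The open polydisk. -/
def PD (d : ℕ) : Set (Fin d → ℂ) := {z : Fin d → ℂ | ∀ j, ‖z j‖ < 1}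

/-- Product weight. -/
noncomputable def wtd {d : ℕ} (l : Fin d → ℕ) (z : Fin d → ℂ) : ENNReal := ∏ j, wt1 (l j) (z j)

lemma PD_open (d : ℕ) : IsOpen (PD d) := by
  simp only [PD, ofPred_forall]
  exact isOpen_iInter_of_finite fun j => isOpen_lt (by fun_prop) continuous_const

lemma wtd_measurable {d : ℕ} (l : Fin d → ℕ) : Measurable (wtd l) := by
  unfold wtd
  exact Finset.measurable_fun_prod _ fun j _ => (wt1_measurable (l j)).comp (measurable_pi_apply j)

lemma wtd_notMem {d : ℕ} (l : Fin d → ℕ) (z : Fin d → ℂ) (hz : z ∉ PD d) : wtd l z = 0 := by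
  simp only [PD, mem_ofPred_eq, not_forall] at hz
  obtain ⟨j, hj⟩ := hz
  refine Finset.prod_eq_zero (Finset.mem_univ j) ?_
  rw [wt1, indicator_of_notMem]
  simpa using hj

lemma wtd_mem {d : ℕ} (l : Fin d → ℕ) (z : Fin d → ℂ) (hz : z ∈ PD d) :
    wtd l z = ENNReal.ofReal (∏ j, (1 + (l j : ℝ)) * (1 - ‖z j‖ ^ 2) ^ l j) := by
  rw [ENNReal.ofReal_prod_of_nonneg]
  · refine Finset.prod_congr rfl fun j _ => ?_
    rw [wt1, indicator_of_mem]
    simpa using hz j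
  · intro j _
    have h1 : ‖z j‖ < 1 := hz j
    have : 0 ≤ 1 - ‖z j‖ ^ 2 := by nlinarith [norm_nonneg (z j)]
    positivity

lemma meas_aux {d : ℕ} (l : Fin d → ℕ) (h : (Fin d → ℂ) → ℂ) (hh : ContinuousOn h (PD d)) :
    Measurable fun z => ‖h z‖ₑ ^ 2 * wtd l z := by
  have : (fun z => ‖h z‖ₑ ^ 2 * wtd l z) = fun z => ‖(PD d).indicator h z‖ₑ ^ 2 * wtd l z := by
    ext z
    by_cases hz : z ∈ PD d
    · rw [indicator_of_mem hz]
    · rw [wtd_notMem l z hz, mul_zero, mul_zero]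
  rw [this]
  have hm : Measurable ((PD d).indicator h) := by
    classical
    have := hh.measurable_piecewise (g := fun _ => (0:ℂ)) continuousOn_const (PD_open d).measurableSet
    rw [← piecewise_eq_indicator]
    exact this
  exact (hm.enorm.pow_const 2).mul (wtd_measurable l)

lemma wtd_update {d : ℕ} (l : Fin d → ℕ) (x : Fin d → ℂ) (κ : Fin d) (ξ : ℂ) :
    wtd l (Function.update x κ ξ) =
      wt1 (l κ) ξ * ∏ j ∈ Finset.univ.erase κ, wt1 (l j) (x j) := by
  unfold wtd
  rw [← Finset.mul_prod_erase _ _ (Finset.mem_univ κ), Function.update_self]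
  congr 1
  refine Finset.prod_congr rfl fun j hj => ?_
  rw [Function.update_of_ne (Finset.ne_of_mem_erase hj)]

lemma upd_diff {d : ℕ} (κ : Fin d) (φ : ℂ → ℂ) (hφd : DifferentiableOn ℂ φ (ball 0 1)) :
    DifferentiableOn ℂ (fun z : Fin d → ℂ => Function.update z κ (φ (z κ))) (PD d) := by
  rw [differentiableOn_pi]
  intro j
  by_cases hj : j = κ
  · subst hj
    simp only [Function.update_self]
    exact hφd.comp (by fun_prop) (fun z hz => by simpa using hz j)
  · simp only [Function.update_of_ne hj]
    fun_prop

lemma upd_maps {d : ℕ} (κ : Fin d) (φ : ℂ → ℂ) (hφm : MapsTo φ (ball 0 1) (ball 0 1)) :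
    MapsTo (fun z : Fin d → ℂ => Function.update z κ (φ (z κ))) (PD d) (PD d) := by
  intro z hz j
  by_cases hj : j = κ
  · subst hj
    simp only [Function.update_self]
    simpa using hφm (by simpa using hz j : z j ∈ ball (0:ℂ) 1)
  · simp only [Function.update_of_ne hj]
    exact hz j

lemma step_bd {d : ℕ} (l : Fin d → ℕ) (κ : Fin d) (φ : ℂ → ℂ)
    (hφd : DifferentiableOn ℂ φ (ball 0 1)) (hφm : MapsTo φ (ball 0 1) (ball 0 1)) (R : ℝ)
    (hR : ∀ u : ℂ → ℂ, DifferentiableOn ℂ u (ball 0 1) →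
      ∫⁻ z, ‖u (φ z)‖ₑ ^ 2 * wt1 (l κ) z ∂dA
        ≤ ENNReal.ofReal R * ∫⁻ z, ‖u z‖ₑ ^ 2 * wt1 (l κ) z ∂dA)
    (h : (Fin d → ℂ) → ℂ) (hh : DifferentiableOn ℂ h (PD d)) :
    ∫⁻ z, ‖h (Function.update z κ (φ (z κ)))‖ₑ ^ 2 * wtd l z ∂(Measure.pi fun _ => dA)
      ≤ ENNReal.ofReal R * ∫⁻ z, ‖h z‖ₑ ^ 2 * wtd l z ∂(Measure.pi fun _ => dA) := by
  rw [← lintegral_const_mul' _ _ (by simp)]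
  have hm1 := meas_aux l (fun z => h (Function.update z κ (φ (z κ))))
    (hh.comp (upd_diff κ φ hφd) (upd_maps κ φ hφm)).continuousOn
  have hm2 := (meas_aux l h hh.continuousOn).const_mul (ENNReal.ofReal R)
  refine lintegral_le_of_lmarginal_le {κ} hm1 hm2 ?_
  rw [lmarginal_singleton, lmarginal_singleton]
  intro x
  simp only [Function.update_self, Function.update_idem, wtd_update]
  by_cases hx : ∀ j, j ≠ κ → ‖x j‖ < 1
  · set P := ∏ j ∈ Finset.univ.erase κ, wt1 (l j) (x j) with hP
    have hPt : P ≠ ⊤ := by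
      refine ENNReal.prod_ne_top fun j _ => ?_
      unfold wt1
      by_cases hj : x j ∈ ball (0:ℂ) 1
      · rw [indicator_of_mem hj]; exact ENNReal.ofReal_ne_top
      · rw [indicator_of_notMem hj]; simp
    have hu : DifferentiableOn ℂ (fun ξ => h (Function.update x κ ξ)) (ball 0 1) := by
      refine hh.comp ?_ ?_
      · rw [differentiableOn_pi]
        intro j
        by_cases hj : j = κ
        · subst hj
          simp only [Function.update_self]
          fun_prop
        · simp only [Function.update_of_ne hj]
          fun_prop
      · intro ξ hξ j
        by_cases hj : j = κ
        · subst hj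
          simpa using hξ
        · simpa only [Function.update_of_ne hj] using hx j hj
    simp only [← mul_assoc]
    rw [lintegral_mul_const' _ _ hPt, lintegral_mul_const' _ _ hPt]
    refine mul_le_mul' ?_ le_rfl
    simp only [mul_assoc]
    rw [lintegral_const_mul' _ _ (by simp)]
    exact hR _ hu
  · push Not at hx
    obtain ⟨j, hj, hj1⟩ := hx
    have : ∏ j ∈ Finset.univ.erase κ, wt1 (l j) (x j) = 0 := by
      refine Finset.prod_eq_zero (i := j) (by simp [hj]) ?_
      rw [wt1, indicator_of_notMem]
      simpa using hj1
    simp [this]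

lemma multi_bd {d : ℕ} (l : Fin d → ℕ) (φ : Fin d → ℂ → ℂ)
    (hφd : ∀ κ, DifferentiableOn ℂ (φ κ) (ball 0 1))
    (hφm : ∀ κ, MapsTo (φ κ) (ball 0 1) (ball 0 1)) (R : Fin d → ℝ) (hR0 : ∀ κ, 0 < R κ)
    (hR : ∀ κ, ∀ u : ℂ → ℂ, DifferentiableOn ℂ u (ball 0 1) →
      ∫⁻ z, ‖u (φ κ z)‖ₑ ^ 2 * wt1 (l κ) z ∂dA
        ≤ ENNReal.ofReal (R κ) * ∫⁻ z, ‖u z‖ₑ ^ 2 * wt1 (l κ) z ∂dA) (s : Finset (Fin d)) :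
    ∀ h : (Fin d → ℂ) → ℂ, DifferentiableOn ℂ h (PD d) →
    ∫⁻ z, ‖h (fun j => if j ∈ s then φ j (z j) else z j)‖ₑ ^ 2 * wtd l z ∂(Measure.pi fun _ => dA)
      ≤ ENNReal.ofReal (∏ κ ∈ s, R κ) *
        ∫⁻ z, ‖h z‖ₑ ^ 2 * wtd l z ∂(Measure.pi fun _ => dA) := by
  induction s using Finset.induction_on with
  | empty => intro h hh; simp
  | insert κ s hκ ih =>
    intro h hh
    have h1 := ih _ (hh.comp (upd_diff κ (φ κ) (hφd κ)) (upd_maps κ (φ κ) (hφm κ)))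
    have h2 := step_bd l κ (φ κ) (hφd κ) (hφm κ) (R κ) (hR κ) h hh
    have he : ∀ z : Fin d → ℂ, (fun j => if j ∈ insert κ s then φ j (z j) else z j) =
        Function.update (fun j => if j ∈ s then φ j (z j) else z j) κ (φ κ (z κ)) := by
      intro z
      ext j
      by_cases hj : j = κ
      · subst hj; simp
      · simp [hj]
    simp only [he]
    simp only [Function.comp_def, hκ, if_false] at h1
    refine h1.trans ?_
    rw [Finset.prod_insert hκ, mul_comm (R κ),
      ENNReal.ofReal_mul (Finset.prod_nonneg fun i _ => (hR0 i).le), mul_assoc]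
    gcongr

lemma lft_data (l : ℕ) (p q a b : ℂ) (φ : ℂ → ℂ) (hne : p * b - q * a ≠ 0)
    (hab : ∀ z ∈ ball (0:ℂ) 1, a * z + b ≠ 0)
    (hφ : ∀ z ∈ ball (0:ℂ) 1, φ z = (p * z + q) / (a * z + b))
    (hm : MapsTo φ (ball 0 1) (ball 0 1)) :
    DifferentiableOn ℂ φ (ball 0 1) ∧ ∃ R : ℝ, 0 < R ∧
    ∀ u : ℂ → ENNReal,
      ∫⁻ z, u (φ z) * wt1 l z ∂dA ≤ ENNReal.ofReal R * ∫⁻ z, u z * wt1 l z ∂dA := by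
  have hd : ∀ z ∈ ball (0:ℂ) 1, HasDerivAt φ ((p * b - q * a) / (a * z + b) ^ 2) z := by
    intro z hz
    have h1 : HasDerivAt (fun z : ℂ => p * z + q) p z := by
      simpa using ((hasDerivAt_id z).const_mul p).add_const q
    have h2 : HasDerivAt (fun z : ℂ => a * z + b) a z := by
      simpa using ((hasDerivAt_id z).const_mul a).add_const b
    have h3 := h1.div h2 (hab z hz)
    have h4 : φ =ᶠ[nhds z] ((fun z : ℂ => p * z + q) / fun z : ℂ => a * z + b) := by
      filter_upwards [isOpen_ball.mem_nhds hz] with y hy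
      exact hφ y hy
    refine (h3.congr_of_eventuallyEq h4).congr_deriv ?_
    congr 1
    ring
  refine ⟨fun z hz => (hd z hz).differentiableAt.differentiableWithinAt, ?_⟩
  have hpos : 0 < ‖p * b - q * a‖ := norm_pos_iff.2 hne
  have hB : 0 < ‖a‖ + ‖b‖ := by
    rcases eq_or_ne a 0 with h | h
    · have hb : b ≠ 0 := by rintro rfl; simp [h] at hne
      have := norm_pos_iff.2 hb
      positivity
    · have := norm_pos_iff.2 h
      positivity
  refine univ_bd l φ _ hd hm ?_ ((‖p * b - q * a‖ / (‖a‖ + ‖b‖) ^ 2) ^ 2) (by positivity) ?_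
  · intro x hx y hy hxy
    rw [hφ x hx, hφ y hy, div_eq_div_iff (hab x hx) (hab y hy)] at hxy
    have : (p * b - q * a) * (x - y) = 0 := by linear_combination hxy
    rcases mul_eq_zero.1 this with h | h
    · exact absurd h hne
    · exact sub_eq_zero.1 h
  · intro z hz
    have hz' : ‖z‖ < 1 := by simpa using hz
    rw [norm_div, norm_pow]
    have h1 : 0 < ‖a * z + b‖ := norm_pos_iff.2 (hab z hz)
    have h2 : ‖a * z + b‖ ≤ ‖a‖ + ‖b‖ := by
      refine (norm_add_le _ _).trans ?_
      rw [norm_mul]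
      nlinarith [norm_nonneg a]
    gcongr

theorem stmt_17 (d : ℕ) (hd : 1 ≤ d) (ℓ : Fin d → ℕ)
    (U₁ U₂ : Finset (Fin d)) (hU : U₁ ∪ U₂ = Finset.univ) (hUdisj : U₁ ∩ U₂ = ∅)
    (q : Fin d → ℂ) (hq : ∀ j ∈ U₂, ‖q j‖ = 1)
    (c : ℂ) (w : Fin d → ℂ) (hw : ∀ j, ‖w j‖ < 1)
    (f : (Fin d → ℂ) → ℂ)
    (hf : ∀ z : Fin d → ℂ, f z = c * ∏ j, ((1 - z j * conj (w j)) ^ (ℓ j + 2))⁻¹)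
    (g : (Fin d → ℂ) → Fin d → ℂ)
    (hgmap : ∀ z ∈ {z : Fin d → ℂ | ∀ j, ‖z j‖ < 1}, ∀ κ, ‖g z κ‖ < 1)
    (hg1 : ∀ κ ∈ U₁,
      (∃ k : ℂ, ‖k‖ < 1 ∧ ∀ z ∈ {z : Fin d → ℂ | ∀ j, ‖z j‖ < 1}, g z κ = k) ∨
      (∃ E F G : ℂ, E ≠ 0 ∧
        ‖(G * F + E) * conj F - G‖ + ‖E‖ ≤ ‖F‖ ^ 2 - 1 ∧
        ∀ z ∈ {z : Fin d → ℂ | ∀ j, ‖z j‖ < 1}, g z κ = G + E / (z κ + F)))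
    (hg2 : ∀ κ ∈ U₂,
      (∃ k : ℂ, ‖k‖ < 1 ∧ ∀ z ∈ {z : Fin d → ℂ | ∀ j, ‖z j‖ < 1}, g z κ = k) ∨
      (∃ α β : ℂ, β ≠ 0 ∧
        ‖α + conj α * (β - α ^ 2)‖ + ‖β‖ ≤ 1 - ‖α‖ ^ 2 ∧
        ∀ z ∈ {z : Fin d → ℂ | ∀ j, ‖z j‖ < 1},
          g z κ = α + β * q κ * z κ / (1 - α * q κ * z κ))) :
    ∃ R : ℝ, 0 < R ∧
      ∀ h : (Fin d → ℂ) → ℂ,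
        AnalyticOnNhd ℂ h {z : Fin d → ℂ | ∀ j, ‖z j‖ < 1} →
        (∫⁻ z in {z : Fin d → ℂ | ∀ j, ‖z j‖ < 1},
            ENNReal.ofReal (‖f z * h (g z)‖ ^ 2 *
              ∏ j, (1 + (ℓ j : ℝ)) * (1 - ‖z j‖ ^ 2) ^ ℓ j)
            ∂(Measure.pi fun _ => dA))
          ≤ ENNReal.ofReal R *
            ∫⁻ x in {x : Fin d → ℂ | ∀ j, ‖x j‖ < 1},
              ENNReal.ofReal (‖h x‖ ^ 2 * ∏ j, (1 + (ℓ j : ℝ)) * (1 - ‖x j‖ ^ 2) ^ ℓ j)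
              ∂(Measure.pi fun _ => dA) := by
  have key : ∀ κ, ∃ φ : ℂ → ℂ, ∃ R : ℝ, (∀ z ∈ PD d, g z κ = φ (z κ)) ∧
      DifferentiableOn ℂ φ (ball 0 1) ∧ MapsTo φ (ball 0 1) (ball 0 1) ∧ 0 < R ∧
      ∀ u : ℂ → ℂ, DifferentiableOn ℂ u (ball 0 1) →
      ∫⁻ z, ‖u (φ z)‖ₑ ^ 2 * wt1 (ℓ κ) z ∂dA
        ≤ ENNReal.ofReal R * ∫⁻ z, ‖u z‖ₑ ^ 2 * wt1 (ℓ κ) z ∂dA := by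
    intro κ
    have hconst : (∃ k : ℂ, ‖k‖ < 1 ∧ ∀ z ∈ {z : Fin d → ℂ | ∀ j, ‖z j‖ < 1}, g z κ = k) →
        ∃ φ : ℂ → ℂ, ∃ R : ℝ, (∀ z ∈ PD d, g z κ = φ (z κ)) ∧
      DifferentiableOn ℂ φ (ball 0 1) ∧ MapsTo φ (ball 0 1) (ball 0 1) ∧ 0 < R ∧
      ∀ u : ℂ → ℂ, DifferentiableOn ℂ u (ball 0 1) →
      ∫⁻ z, ‖u (φ z)‖ₑ ^ 2 * wt1 (ℓ κ) z ∂dA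
        ≤ ENNReal.ofReal R * ∫⁻ z, ‖u z‖ₑ ^ 2 * wt1 (ℓ κ) z ∂dA := by
      rintro ⟨k, hk, hgk⟩
      obtain ⟨R, hR0, hR⟩ := const_bd (ℓ κ) k hk
      exact ⟨fun _ => k, R, hgk, by fun_prop, fun _ _ => by simpa using hk, hR0, hR⟩
    have hmaps : ∀ φ : ℂ → ℂ, (∀ z ∈ PD d, g z κ = φ (z κ)) →
        MapsTo φ (ball 0 1) (ball 0 1) := by
      intro φ hφ ξ hξ
      have hmem : (fun _ => ξ) ∈ PD d := fun _ => by simpa using hξ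
      have := hgmap _ hmem κ
      rw [hφ _ hmem] at this
      simpa using this
    have hκ : κ ∈ U₁ ∪ U₂ := by rw [hU]; exact Finset.mem_univ _
    rcases Finset.mem_union.1 hκ with h1 | h2
    · rcases hg1 κ h1 with hc | ⟨E, F, G, hE, hineq, hgz⟩
      · exact hconst hc
      · have hm := hmaps (fun ξ => G + E / (ξ + F)) hgz
        have hE' := norm_pos_iff.2 hE
        have hF : 1 < ‖F‖ := by
          nlinarith [norm_nonneg ((G * F + E) * conj F - G), norm_nonneg F]
        have hab : ∀ z ∈ ball (0:ℂ) 1, (1:ℂ) * z + F ≠ 0 := by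
          intro z hz h0
          have hz' : ‖z‖ < 1 := by simpa using hz
          have : F = -z := by linear_combination h0
          rw [this, norm_neg] at hF
          linarith
        obtain ⟨hd', R, hR0, hR⟩ := lft_data (ℓ κ) G (G * F + E) 1 F
          (fun ξ => G + E / (ξ + F)) (by
            intro h0
            apply hE
            linear_combination -h0) hab (by
            intro z hz
            have := hab z hz
            rw [one_mul] at this
            rw [one_mul]
            field_simp
            ring) hm
        exact ⟨fun ξ => G + E / (ξ + F), R, hgz, hd', hm, hR0, fun u _ => hR (fun z => ‖u z‖ₑ ^ 2)⟩
    · rcases hg2 κ h2 with hc | ⟨α, β, hβ, hineq, hgz⟩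
      · exact hconst hc
      · have hm := hmaps (fun ξ => α + β * q κ * ξ / (1 - α * q κ * ξ)) hgz
        have hβ' := norm_pos_iff.2 hβ
        have hq1 := hq κ h2
        have hq0 : q κ ≠ 0 := by
          intro h0
          rw [h0, norm_zero] at hq1
          exact zero_ne_one hq1
        have hα : ‖α‖ < 1 := by
          nlinarith [norm_nonneg (α + conj α * (β - α ^ 2)), norm_nonneg α]
        have hab : ∀ z ∈ ball (0:ℂ) 1, (-(α * q κ)) * z + 1 ≠ 0 := by
          intro z hz h0
          have hz' : ‖z‖ < 1 := by simpa using hz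
          have h1 : α * q κ * z = 1 := by linear_combination -h0
          have h2 := congrArg norm h1
          rw [norm_mul, norm_mul, hq1, mul_one, norm_one] at h2
          nlinarith [norm_nonneg α, norm_nonneg z]
        obtain ⟨hd', R, hR0, hR⟩ := lft_data (ℓ κ) (β * q κ - α ^ 2 * q κ) α (-(α * q κ)) 1
          (fun ξ => α + β * q κ * ξ / (1 - α * q κ * ξ)) (by
            intro h0
            apply mul_ne_zero hβ hq0
            linear_combination h0) hab (by
            intro z hz
            have h3 := hab z hz
            have h4 : (-(α * q κ)) * z + 1 = 1 - α * q κ * z := by ring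
            rw [h4] at h3 ⊢
            rw [eq_div_iff h3, add_mul, div_mul_cancel₀ _ h3]
            ring) hm
        exact ⟨fun ξ => α + β * q κ * ξ / (1 - α * q κ * ξ), R, hgz, hd', hm, hR0, fun u _ => hR (fun z => ‖u z‖ₑ ^ 2)⟩
  choose φ R hφg hφd hφm hR0 hR using key
  set M : ℝ := ‖c‖ * ∏ j, ((1 - ‖w j‖) ^ (ℓ j + 2))⁻¹ with hM
  have hfb : ∀ z ∈ PD d, ‖f z‖ ≤ M := by
    intro z hz
    rw [hf, norm_mul, norm_prod, hM]
    gcongr with j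
    rw [norm_inv, norm_pow]
    have h1 : ‖z j‖ < 1 := hz j
    have h2 : ‖(1:ℂ)‖ - ‖z j * conj (w j)‖ ≤ ‖1 - z j * conj (w j)‖ := norm_sub_norm_le _ _
    rw [norm_mul, RCLike.norm_conj, norm_one] at h2
    have h3 : 0 < 1 - ‖w j‖ := by linarith [hw j]
    have h4 : 1 - ‖w j‖ ≤ ‖1 - z j * conj (w j)‖ := by nlinarith [norm_nonneg (w j)]
    gcongr
  have hprod : 0 < ∏ κ, R κ := Finset.prod_pos fun κ _ => hR0 κ
  refine ⟨(M ^ 2 + 1) * ∏ κ, R κ, by positivity, fun h hh => ?_⟩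
  have hmb := multi_bd ℓ φ hφd hφm R hR0 hR Finset.univ h hh.differentiableOn
  simp only [Finset.mem_univ, if_true] at hmb
  have hD : MeasurableSet (PD d) := (PD_open d).measurableSet
  have hset : ∀ u : (Fin d → ℂ) → ℂ, ∫⁻ z in PD d, ‖u z‖ₑ ^ 2 * wtd ℓ z ∂(Measure.pi fun _ => dA)
      = ∫⁻ z, ‖u z‖ₑ ^ 2 * wtd ℓ z ∂(Measure.pi fun _ => dA) := by
    intro u
    rw [← lintegral_indicator hD]
    congr 1; ext z
    by_cases hz : z ∈ PD d
    · rw [indicator_of_mem hz]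
    · rw [indicator_of_notMem hz, wtd_notMem ℓ z hz, mul_zero]
  have hconv : ∀ (a : ℂ) (z : Fin d → ℂ), z ∈ PD d →
      ENNReal.ofReal (‖a‖ ^ 2 * ∏ j, (1 + (ℓ j : ℝ)) * (1 - ‖z j‖ ^ 2) ^ ℓ j)
        = ‖a‖ₑ ^ 2 * wtd ℓ z := by
    intro a z hz
    rw [ENNReal.ofReal_mul (by positivity), wtd_mem ℓ z hz, ENNReal.ofReal_pow (norm_nonneg _),
      ofReal_norm]
  change (∫⁻ z in PD d, _ ∂_) ≤ _ * ∫⁻ z in PD d, _ ∂_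
  calc _ ≤ ∫⁻ z in PD d, ENNReal.ofReal (M ^ 2 + 1) *
          (‖h (fun j => φ j (z j))‖ₑ ^ 2 * wtd ℓ z) ∂(Measure.pi fun _ => dA) := by
        refine setLIntegral_mono' hD fun z hz => ?_
        rw [hconv _ z hz, enorm_mul, mul_pow, mul_assoc]
        have hgz : g z = fun j => φ j (z j) := by
          ext j
          exact hφg j z hz
        rw [hgz]
        gcongr
        rw [← ofReal_norm, ← ENNReal.ofReal_pow (norm_nonneg _)]
        apply ENNReal.ofReal_le_ofReal
        have := hfb z hz
        have := pow_le_pow_left₀ (norm_nonneg _) this 2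
        linarith
    _ = ENNReal.ofReal (M ^ 2 + 1) *
          ∫⁻ z, ‖h (fun j => φ j (z j))‖ₑ ^ 2 * wtd ℓ z ∂(Measure.pi fun _ => dA) := by
        rw [lintegral_const_mul' _ _ (by simp), hset (fun z => h (fun j => φ j (z j)))]
    _ ≤ ENNReal.ofReal (M ^ 2 + 1) * (ENNReal.ofReal (∏ κ, R κ) *
          ∫⁻ z, ‖h z‖ₑ ^ 2 * wtd ℓ z ∂(Measure.pi fun _ => dA)) := by gcongr
    _ = _ := by
        rw [← mul_assoc, ← ENNReal.ofReal_mul (by positivity), ← hset]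
        congr 1
        exact setLIntegral_congr_fun hD fun z hz => (hconv _ z hz).symm
end
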